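/- (Unified validity of conformal prediction with randomized scores) Let Z and V be measurable spaces, let μ be a probability measure on Z^{N+1} invariant under every permutation of the N+1 coordinates, and let κ be a Markov kernel from Z to V. Let (z_1, ν_1), …, (z_{N+1}, ν_{N+1}) have the joint distribution obtained by drawing (z_1, …, z_{N+1}) ∼ μ and then, conditionally independently given the z's, drawing ν_i ∼ κ(z_i, ·). Let t : Z × V → ℝ be measurable, let α ∈ (0,1) satisfy α ≥ 1/(N+1), and set k = ⌈(1−α)(N+1)⌉. Then Pr( t(z_{N+1}, ν_{N+1}) ≤ k-th smallest value among t(z_1, ν_1), …, t(z_N, ν_N) ) ≥ 1 − α. -/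

import Mathlib

open MeasureTheory ProbabilityTheory

/-- The `k`-th smallest value (counting multiplicities) of a list of reals:
the `k`-th entry of the list sorted in nondecreasing order. -/
noncomputable def kthSmallest (l : List ℝ) (k : ℕ) : ℝ :=
  (l.mergeSort (fun a b => @decide (a ≤ b) (Classical.propDecidable _))).getD (k - 1) 0

/-!
Conditionally independent draws from one kernel commute with permutations of the coordinates, so
the pairs `(z i, ν i)` are again exchangeable. Deterministically, at least `k` of the `N + 1`
scores have fewer than `k` scores strictly below them. By exchangeability each position is one of
these with the same probability, which is therefore at least `k / (N + 1) ≥ 1 - α`. If the last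
position is one of these, its score is at most the `k`-th smallest of the other `N` scores.
-/

open scoped ENNReal Finset

section StrictRank

variable {ι α : Type*} [Fintype ι] [LinearOrder α]

/-- The strict rank of the entry `j` in the family `f`: the number of entries strictly below `f j`.
Tied entries share the same strict rank. -/
def strictRank (f : ι → α) (j : ι) : ℕ :=
  #{i | f i < f j}

lemma strictRank_comp_equiv {ι' : Type*} [Fintype ι'] (f : ι → α) (e : ι' ≃ ι) (j : ι') :
    strictRank (fun i => f (e i)) j = strictRank f (e j) := by
  simp only [strictRank, Finset.card_filter]
  exact Equiv.sum_comp e fun i => if f i < f (e j) then 1 else 0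

-- If some strict rank is at least `k`, the entries below a smallest such entry all rank below `k`,
-- and there are at least `k` of them.
lemma le_card_strictRank_lt (f : ι → α) {k : ℕ} (hk : k ≤ Fintype.card ι) :
    k ≤ #{j | strictRank f j < k} := by
  rcases Finset.eq_empty_or_nonempty {j | k ≤ strictRank f j} with hnone | hsome
  · have hall (j : ι) : strictRank f j < k := by
      simpa using Finset.filter_eq_empty_iff.1 hnone (Finset.mem_univ j)
    simpa [hall] using hk
  · obtain ⟨m, hm, hmin⟩ := Finset.exists_min_image _ f hsome
    rw [Finset.mem_filter_univ] at hm
    refine hm.trans (Finset.card_le_card fun i hi => ?_)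
    rw [Finset.mem_filter_univ] at hi ⊢
    by_contra! hik
    exact (hmin i ((Finset.mem_filter_univ i).2 hik)).not_gt hi

variable [TopologicalSpace α] [OrderClosedTopology α] [SecondCountableTopology α]
  [MeasurableSpace α] [OpensMeasurableSpace α]

lemma measurable_strictRank (j : ι) :
    Measurable fun f : ι → α => strictRank f j := by
  simp only [strictRank, Finset.card_filter]
  exact Finset.measurable_sum _ fun i _ =>
    Measurable.ite (measurableSet_lt (measurable_pi_apply i) (measurable_pi_apply j))
      measurable_const measurable_const

lemma measurableSet_strictRank_lt {W : Type*} [MeasurableSpace W] {t : W → α} (ht : Measurable t)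
    (k : ℕ) (j : ι) : MeasurableSet {w : ι → W | strictRank (fun i => t (w i)) j < k} :=
  measurableSet_lt ((measurable_strictRank j).comp (by fun_prop)) measurable_const

end StrictRank

section OrderStatistics

lemma le_getElem_of_countP_lt_le {α : Type*} [LinearOrder α] {l : List α} (hl : l.SortedLE)
    {a : α} {i : ℕ} (hi : i < l.length) (h : l.countP (· < a) ≤ i) : a ≤ l[i] := by
  by_contra! hlt
  have hprefix : (l.take (i + 1)).countP (· < a) = (l.take (i + 1)).length := by
    refine List.countP_eq_length.2 fun b hb => ?_
    obtain ⟨j, hj, rfl⟩ := List.getElem_of_mem hb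
    have hji : j ≤ i := by grind
    simpa using (hl.getElem_le_getElem_of_le hji).trans_lt hlt
  have hcount : (l.take (i + 1)).length ≤ l.countP (· < a) :=
    hprefix ▸ (List.take_sublist (i + 1) l).countP_le
  grind

lemma le_kthSmallest {l : List ℝ} {k : ℕ} {a : ℝ} (hk : k ≤ l.length)
    (h : l.countP (· < a) < k) : a ≤ kthSmallest l k := by
  set s := l.mergeSort (fun a b => @decide (a ≤ b) (Classical.propDecidable _)) with hs
  have hperm : s.Perm l := List.mergeSort_perm _ _
  have hsorted : s.SortedLE := by
    classical
    convert List.sortedLE_mergeSort (l := l)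
  have hlt : k - 1 < s.length := by rw [hperm.length_eq]; lia
  rw [kthSmallest, ← hs, List.getD_eq_getElem _ _ hlt]
  refine le_getElem_of_countP_lt_le hsorted hlt ?_
  rw [hperm.countP_eq]
  lia

lemma countP_ofFn {α : Type*} {n : ℕ} (f : Fin n → α) (p : α → Prop) [DecidablePred p] :
    (List.ofFn f).countP p = #{i | p (f i)} := by
  rw [← Multiset.coe_countP, ← Fin.univ_val_map, Multiset.countP_map]
  rfl

lemma strictRank_last {α : Type*} [LinearOrder α] {n : ℕ} (f : Fin (n + 1) → α) :
    strictRank f (Fin.last n) =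
      (List.ofFn fun i : Fin n => f i.castSucc).countP (· < f (Fin.last n)) := by
  rw [countP_ofFn, strictRank, Finset.card_filter, Finset.card_filter, Fin.sum_univ_castSucc]
  simp

end OrderStatistics

/-- A measure on `ι → W` is exchangeable if it is invariant under every permutation of the
coordinates. -/
def Exchangeable {ι W : Type*} [MeasurableSpace W] (P : Measure (ι → W)) : Prop :=
  ∀ π : Equiv.Perm ι, P.map (fun w i => w (π i)) = P

section ProductKernel

variable {ι Z W : Type*} [Fintype ι] [MeasurableSpace Z] [MeasurableSpace W]

lemma measurable_measure_pi {X : ι → Type*} [∀ i, MeasurableSpace (X i)]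
    {m : ∀ i, Z → Measure (X i)} [∀ i z, IsProbabilityMeasure (m i z)]
    (hm : ∀ i, Measurable (m i)) : Measurable fun z => Measure.pi fun i => m i z := by
  refine Measurable.measure_of_isPiSystem_of_isProbabilityMeasure
    generateFrom_pi.symm isPiSystem_pi ?_
  rintro _ ⟨s, hs, rfl⟩
  simp only [Measure.pi_pi]
  exact Finset.measurable_prod _ fun i _ =>
    (Measure.measurable_coe (hs i (Set.mem_univ i))).comp (hm i)

lemma pi_map_comp_equiv {ι' : Type*} [Fintype ι'] {X : ι → Type*} [∀ i, MeasurableSpace (X i)]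
    (m : ∀ i, Measure (X i)) [∀ i, SigmaFinite (m i)] (e : ι' ≃ ι) :
    (Measure.pi m).map (fun w i => w (e i)) = Measure.pi fun i => m (e i) :=
  ((measurePreserving_piCongrLeft m e).symm _).map_eq

variable (ι) in
/-- The kernel sending `z : ι → Z` to the law of a family of independent draws, the `i`-th one
from `κ (z i)`. -/
noncomputable def productKernel (κ : Kernel Z W) [IsMarkovKernel κ] : Kernel (ι → Z) (ι → W) where
  toFun z := Measure.pi fun i => κ (z i)
  measurable' := measurable_measure_pi fun i => κ.measurable.comp (measurable_pi_apply i)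

variable (κ : Kernel Z W) [IsMarkovKernel κ]

lemma productKernel_apply (z : ι → Z) : productKernel ι κ z = Measure.pi fun i => κ (z i) := rfl

instance : IsMarkovKernel (productKernel ι κ) :=
  ⟨fun z => by rw [productKernel_apply]; infer_instance⟩

lemma productKernel_id_prod_apply (z : ι → Z) :
    productKernel ι (Kernel.id ×ₖ κ) z =
      (Measure.pi fun i => κ (z i)).map fun v i => (z i, v i) := by
  have hgraph (i : ι) : (Kernel.id ×ₖ κ) (z i) = (κ (z i)).map (Prod.mk (z i)) := by
    rw [Kernel.prod_apply, Kernel.id_apply, Measure.dirac_prod]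
  have (i : ι) : IsProbabilityMeasure ((κ (z i)).map (Prod.mk (z i))) :=
    Measure.isProbabilityMeasure_map (by fun_prop)
  simp only [productKernel_apply, hgraph]
  exact (Measure.pi_map_pi (f := fun i => Prod.mk (z i)) fun i => by fun_prop).symm

lemma Exchangeable.bind_productKernel {μ : Measure (ι → Z)} (hμ : Exchangeable μ) :
    Exchangeable (μ.bind (productKernel ι κ)) := by
  intro π
  have hequivariant : (productKernel ι κ).map (fun w i => w (π i)) =
      (productKernel ι κ).comap (fun z i => z (π i)) (by fun_prop) := by
    ext1 z
    rw [Kernel.map_apply _ (by fun_prop), Kernel.comap_apply]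
    exact pi_map_comp_equiv _ π
  rw [Measure.map_comp _ _ (by fun_prop), hequivariant, ← Kernel.comp_deterministic_eq_comap,
    ← Measure.comp_assoc, Measure.deterministic_comp_eq_map, hμ π]

end ProductKernel

lemma mul_measure_univ_le_sum_measure {ι Ω : Type*} [Fintype ι] [MeasurableSpace Ω]
    (P : Measure Ω) {p : ι → Ω → Prop} [∀ j ω, Decidable (p j ω)]
    (hp : ∀ j, MeasurableSet {ω | p j ω}) {k : ℕ} (hk : ∀ ω, k ≤ #{j | p j ω}) :
    k * P Set.univ ≤ ∑ j, P {ω | p j ω} :=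
  calc
    k * P Set.univ = ∫⁻ _, k ∂P := (lintegral_const _).symm
    _ ≤ ∫⁻ ω, ∑ j, {ω | p j ω}.indicator 1 ω ∂P := by
      refine lintegral_mono fun ω => ?_
      simpa [Set.indicator_apply] using hk ω
    _ = ∑ j, P {ω | p j ω} := by
      rw [lintegral_finsetSum _ fun j _ => measurable_one.indicator (hp j)]
      simp only [lintegral_indicator_one (hp _)]

namespace Exchangeable

section StrictRank

variable {ι W α : Type*} [Fintype ι] [MeasurableSpace W] [LinearOrder α] [TopologicalSpace α]
  [OrderClosedTopology α] [SecondCountableTopology α] [MeasurableSpace α] [OpensMeasurableSpace α]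
  {P : Measure (ι → W)} {t : W → α}

lemma measure_strictRank_lt_eq (hP : Exchangeable P) (ht : Measurable t) (k : ℕ) (i j : ι) :
    P {w | strictRank (fun l => t (w l)) i < k} = P {w | strictRank (fun l => t (w l)) j < k} := by
  classical
  conv_rhs => rw [← hP (Equiv.swap i j),
    Measure.map_apply (by fun_prop) (measurableSet_strictRank_lt ht k j)]
  congr 1 with w
  simp [strictRank_comp_equiv (fun l => t (w l))]

lemma div_card_le_measure_strictRank_lt [IsProbabilityMeasure P] (hP : Exchangeable P)
    (ht : Measurable t) {k : ℕ} (hk : k ≤ Fintype.card ι) (j : ι) :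
    (k : ℝ≥0∞) / Fintype.card ι ≤ P {w | strictRank (fun i => t (w i)) j < k} := by
  refine ENNReal.div_le_of_le_mul' ?_
  calc
    (k : ℝ≥0∞) = k * P Set.univ := by rw [measure_univ, mul_one]
    _ ≤ ∑ i, P {w | strictRank (fun l => t (w l)) i < k} :=
      mul_measure_univ_le_sum_measure P (measurableSet_strictRank_lt ht k)
        fun w => le_card_strictRank_lt _ hk
    _ = Fintype.card ι * P {w | strictRank (fun l => t (w l)) j < k} := by
      simp [fun i => hP.measure_strictRank_lt_eq ht k i j]

end StrictRank

lemma div_le_measure_le_kthSmallest {W : Type*} [MeasurableSpace W] {N : ℕ}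
    {P : Measure (Fin (N + 1) → W)} [IsProbabilityMeasure P] (hP : Exchangeable P)
    {t : W → ℝ} (ht : Measurable t) {k : ℕ} (hk : k ≤ N) :
    (k : ℝ≥0∞) / (N + 1 : ℕ) ≤
      P {w | t (w (Fin.last N)) ≤ kthSmallest (List.ofFn fun i : Fin N => t (w i.castSucc)) k} := by
  have hrank := hP.div_card_le_measure_strictRank_lt ht (k := k)
    (by rw [Fintype.card_fin]; lia) (Fin.last N)
  rw [Fintype.card_fin] at hrank
  refine hrank.trans (measure_mono fun w hw => le_kthSmallest ?_ ?_)
  · rwa [List.length_ofFn]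
  · exact strictRank_last (fun i => t (w i)) ▸ hw

end Exchangeable

lemma ofReal_le_natCeil_mul_div (p : ℝ) {n : ℕ} (hn : n ≠ 0) :
    ENNReal.ofReal p ≤ (⌈p * n⌉₊ : ℝ≥0∞) / n := by
  rw [ENNReal.le_div_iff_mul_le (by simp [hn]) (by simp), ← ENNReal.ofReal_natCast n,
    ← ENNReal.ofReal_mul' n.cast_nonneg, ← ENNReal.ofReal_natCast ⌈p * n⌉₊]
  exact ENNReal.ofReal_le_ofReal (Nat.le_ceil _)

/-- Unified validity of conformal prediction with randomized scores: let `μ` be a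
permutation-invariant probability measure on `Z^(N+1)`, `κ` a Markov kernel from `Z`
to `V`, and draw `(z 1, …, z (N+1)) ∼ μ`, then conditionally independently
`ν i ∼ κ (z i)`. For measurable `t : Z × V → ℝ`, `α ∈ (0,1)` with `α ≥ 1/(N+1)` and
`k = ⌈(1-α)(N+1)⌉`, the probability that `t (z (N+1), ν (N+1))` is at most the
`k`-th smallest of `t (z 1, ν 1), …, t (z N, ν N)` is at least `1 - α`. -/
theorem conformal_randomized_scores_validity
    {Z V : Type*} [MeasurableSpace Z] [MeasurableSpace V] (N : ℕ)
    (μ : Measure (Fin (N + 1) → Z)) [IsProbabilityMeasure μ]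
    (hinv : ∀ π : Equiv.Perm (Fin (N + 1)),
      Measure.map (fun (z : Fin (N + 1) → Z) i => z (π i)) μ = μ)
    (κ : Kernel Z V) [IsMarkovKernel κ]
    (t : Z × V → ℝ) (ht : Measurable t)
    (α : ℝ) (hα0 : 0 < α) (hα1 : α < 1) (hαN : 1 / ((N : ℝ) + 1) ≤ α) :
    ENNReal.ofReal (1 - α) ≤
      (μ.bind fun z =>
        Measure.map (fun (v : Fin (N + 1) → V) i => (z i, v i))
          (Measure.pi fun i => κ (z i)))
      {w : Fin (N + 1) → Z × V |
        t (w (Fin.last N)) ≤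
          kthSmallest (List.ofFn fun i : Fin N => t (w i.castSucc))
            ⌈(1 - α) * ((N : ℝ) + 1)⌉₊} := by
  have hlaw : (μ.bind fun z => Measure.map (fun (v : Fin (N + 1) → V) i => (z i, v i))
      (Measure.pi fun i => κ (z i))) = μ.bind (productKernel _ (Kernel.id ×ₖ κ)) := by
    simp only [← productKernel_id_prod_apply]
  have hexch : Exchangeable (μ.bind (productKernel _ (Kernel.id ×ₖ κ))) :=
    Exchangeable.bind_productKernel _ hinv
  have hkN : ⌈(1 - α) * ((N : ℝ) + 1)⌉₊ ≤ N := by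
    rw [div_le_iff₀ (by positivity)] at hαN
    exact Nat.ceil_le.2 (by linarith)
  rw [hlaw]
  refine le_trans ?_ (hexch.div_le_measure_le_kthSmallest ht hkN)
  exact_mod_cast ofReal_le_natCeil_mul_div (1 - α) N.succ_ne_zero
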